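/- arXiv:0709.0036 — 2 statements merged into one kernel-verified Lean document; each statement's English description precedes it below -/
import Mathlib

section
/- (Rank inequality.) Let A and B be two n×m complex matrices. Let F_A and F_B be the cumulative distribution functions of the empirical measures (1/n)∑_{k=1}^n δ_{s_k(A)} and (1/n)∑_{k=1}^n δ_{s_k(B)} of the singular values of A and B respectively. Then sup_{x∈ℝ}|F_A(x) − F_B(x)| ≤ rank(A − B)/n. -/
open Finset Matrix

/-- The singular values of an `n × m` complex matrix `A`: the square roots of the
eigenvalues of the positive semidefinite Hermitian matrix `A Aᴴ` (indexed by `Fin n`,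
with multiplicity, in no particular order). -/
noncomputable def singVals {n m : ℕ} (A : Matrix (Fin n) (Fin m) ℂ) : Fin n → ℝ :=
  fun i => Real.sqrt ((Matrix.isHermitian_mul_conjTranspose_self A).eigenvalues i)

/-!
For a self-adjoint operator `T`, the number of eigenvalues `≤ t` is the largest dimension of a
subspace on which `⟪T v, v⟫ ≤ t * ‖v‖ ^ 2` (Courant–Fischer): the eigenvectors with eigenvalue
`≤ t` span such a subspace, and any other one meets the span of the remaining eigenvectors
trivially. For `T = S† S` the condition reads `‖S v‖ ^ 2 ≤ t * ‖v‖ ^ 2`, so it is the same for `S`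
and `R` on `ker (S - R)`, and intersecting an optimal subspace for `S` with this kernel costs at
most `rank (S - R)` dimensions. Singular values of `A` are the case `S = Aᴴ`, `t = x ^ 2`.
-/

open Module Submodule
open scoped InnerProductSpace

theorem finrank_le_finrank_inf_ker_add_finrank_range {K V W : Type*} [DivisionRing K]
    [AddCommGroup V] [Module K V] [FiniteDimensional K V] [AddCommGroup W] [Module K W]
    (U : Submodule K V) (f : V →ₗ[K] W) :
    finrank K U ≤ finrank K ↥(U ⊓ f.ker) + finrank K f.range := by
  have hsup_inf := finrank_sup_add_finrank_inf_eq U f.ker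
  have hsup_le := finrank_le (U ⊔ f.ker)
  have hrank_nullity := f.finrank_range_add_finrank_ker
  omega

theorem finrank_span_image_finset {ι R M : Type*} [Semiring R] [Nontrivial R] [AddCommMonoid M]
    [Module R M] [StrongRankCondition R] {b : ι → M} (hb : LinearIndependent R b) (s : Finset ι) :
    finrank R (span R (b '' s)) = #s := by
  rw [Set.image_eq_range]
  simpa using! finrank_span_eq_card (hb.comp ((↑) : s → ι) Subtype.val_injective)

theorem matrix_rank_neg {R m n : Type*} [CommRing R] [Fintype n] (A : Matrix m n R) :
    (-A).rank = A.rank := by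
  simpa using rank_smul_of_mem_nonZeroDivisors A (isUnit_one.neg.mem_nonZeroDivisors (M₀ := R))

theorem inner_eq_zero_of_mem_span_image {𝕜 E ι : Type*} [RCLike 𝕜] [SeminormedAddCommGroup E]
    [InnerProductSpace 𝕜 E] {b : ι → E} (hb : Orthonormal 𝕜 b) {s : Set ι} {v : E}
    (hv : v ∈ span 𝕜 (b '' s)) {i : ι} (hi : i ∉ s) : ⟪b i, v⟫_𝕜 = 0 := by
  induction hv using span_induction with
  | mem _ hmem =>
    obtain ⟨j, hj, rfl⟩ := hmem
    exact hb.inner_eq_zero (ne_of_mem_of_not_mem hj hi).symm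
  | zero => exact inner_zero_right _
  | add _ _ _ _ hx hy => rw [inner_add_right, hx, hy, add_zero]
  | smul a _ _ hx => rw [inner_smul_right, hx, mul_zero]

section Eigenbasis

variable {𝕜 E ι : Type*} [RCLike 𝕜] [NormedAddCommGroup E] [InnerProductSpace 𝕜 E] [Fintype ι]
  {b : OrthonormalBasis ι 𝕜 E} {T : E →ₗ[𝕜] E} {w : ι → ℝ} {t : ℝ} {v : E}

theorem re_inner_map_self_eq_sum (hT : ∀ i, T (b i) = (w i : 𝕜) • b i) (v : E) :
    RCLike.re ⟪T v, v⟫_𝕜 = ∑ i, w i * ‖⟪b i, v⟫_𝕜‖ ^ 2 := by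
  have hTv : T v = ∑ i, (⟪b i, v⟫_𝕜 * w i) • b i := by
    conv_lhs => rw [← b.sum_repr' v]
    simp only [map_sum, map_smul, hT, smul_smul]
  rw [hTv, sum_inner, map_sum]
  refine sum_congr rfl fun i _ => ?_
  rw [inner_smul_left, (starRingEnd 𝕜).map_mul, RCLike.conj_ofReal, mul_right_comm,
    RCLike.conj_mul, mul_comm, ← RCLike.ofReal_pow, ← RCLike.ofReal_mul, RCLike.ofReal_re]

theorem re_inner_map_self_le_of_mem_span (hT : ∀ i, T (b i) = (w i : 𝕜) • b i)
    (hv : v ∈ span 𝕜 (b '' {i | w i ≤ t})) : RCLike.re ⟪T v, v⟫_𝕜 ≤ t * ‖v‖ ^ 2 := by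
  rw [re_inner_map_self_eq_sum hT, ← b.sum_sq_norm_inner_right, mul_sum]
  refine sum_le_sum fun i _ => ?_
  by_cases hi : w i ≤ t
  · gcongr
  · simp [inner_eq_zero_of_mem_span_image b.orthonormal hv hi]

theorem lt_re_inner_map_self_of_mem_span (hT : ∀ i, T (b i) = (w i : 𝕜) • b i)
    (hv : v ∈ span 𝕜 (b '' {i | t < w i})) (hv₀ : v ≠ 0) :
    t * ‖v‖ ^ 2 < RCLike.re ⟪T v, v⟫_𝕜 := by
  obtain ⟨j, hj⟩ : ∃ j, ⟪b j, v⟫_𝕜 ≠ 0 := by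
    by_contra! h
    exact hv₀ (by simpa [h] using (b.sum_repr' v).symm)
  have lt_of_inner_ne_zero {i : ι} (hi : ⟪b i, v⟫_𝕜 ≠ 0) : t < w i :=
    not_imp_comm.1 (inner_eq_zero_of_mem_span_image b.orthonormal hv) hi
  rw [re_inner_map_self_eq_sum hT, ← b.sum_sq_norm_inner_right, mul_sum]
  refine sum_lt_sum (fun i _ => ?_) ⟨j, mem_univ j, ?_⟩
  · by_cases hi : ⟪b i, v⟫_𝕜 = 0
    · simp [hi]
    · have := lt_of_inner_ne_zero hi
      gcongr
  · have := lt_of_inner_ne_zero hj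
    gcongr

theorem isGreatest_finrank_re_inner_map_self_le (hT : ∀ i, T (b i) = (w i : 𝕜) • b i) (t : ℝ) :
    IsGreatest
      {d | ∃ V : Submodule 𝕜 E, finrank 𝕜 V = d ∧ ∀ v ∈ V, RCLike.re ⟪T v, v⟫_𝕜 ≤ t * ‖v‖ ^ 2}
      #{i | w i ≤ t} := by
  have hfin : FiniteDimensional 𝕜 E := b.toBasis.finiteDimensional_of_finite
  have hspan (p : ι → Prop) [DecidablePred p] :
      finrank 𝕜 (span 𝕜 (b '' {i | p i})) = #{i | p i} := by
    rw [← finrank_span_image_finset b.orthonormal.linearIndependent, coe_filter_univ]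
  constructor
  · exact ⟨_, hspan (w · ≤ t), fun v hv => re_inner_map_self_le_of_mem_span hT hv⟩
  · rintro _ ⟨V, rfl, hV⟩
    have hdisj : Disjoint V (span 𝕜 (b '' {i | t < w i})) := by
      refine disjoint_def.2 fun v hvV hv => ?_
      by_contra hv₀
      exact (hV v hvV).not_gt (lt_re_inner_map_self_of_mem_span hT hv hv₀)
    have hdim := finrank_add_finrank_le_of_disjoint hdisj
    have hcard := card_filter_add_card_filter_not (s := univ) fun i => w i ≤ t
    simp only [not_le, card_univ] at hcard
    rw [hspan (t < w ·), finrank_eq_card_basis b.toBasis] at hdim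
    omega

end Eigenbasis

section AdjointCompSelf

variable {𝕜 E F ι κ : Type*} [RCLike 𝕜] [NormedAddCommGroup E] [InnerProductSpace 𝕜 E]
  [FiniteDimensional 𝕜 E] [NormedAddCommGroup F] [InnerProductSpace 𝕜 F] [FiniteDimensional 𝕜 F]
  [Fintype ι] [Fintype κ] {b : OrthonormalBasis ι 𝕜 E} {c : OrthonormalBasis κ 𝕜 E}
  {S R : E →ₗ[𝕜] F} {w : ι → ℝ} {u : κ → ℝ}

theorem isGreatest_finrank_sq_norm_map_le
    (hS : ∀ i, (S.adjoint ∘ₗ S) (b i) = (w i : 𝕜) • b i) (t : ℝ) :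
    IsGreatest {d | ∃ V : Submodule 𝕜 E, finrank 𝕜 V = d ∧ ∀ v ∈ V, ‖S v‖ ^ 2 ≤ t * ‖v‖ ^ 2}
      #{i | w i ≤ t} := by
  simpa only [LinearMap.comp_apply, LinearMap.adjoint_inner_left, inner_self_eq_norm_sq] using
    isGreatest_finrank_re_inner_map_self_le hS t

theorem card_eigenvalues_le_le_add_finrank_range
    (hS : ∀ i, (S.adjoint ∘ₗ S) (b i) = (w i : 𝕜) • b i)
    (hR : ∀ k, (R.adjoint ∘ₗ R) (c k) = (u k : 𝕜) • c k) (t : ℝ) :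
    #{i | w i ≤ t} ≤ #{k | u k ≤ t} + finrank 𝕜 (S - R).range := by
  obtain ⟨V, hcard, hV⟩ := (isGreatest_finrank_sq_norm_map_le hS t).1
  have hinf : finrank 𝕜 ↥(V ⊓ (S - R).ker) ≤ #{k | u k ≤ t} := by
    refine (isGreatest_finrank_sq_norm_map_le hR t).2 ⟨_, rfl, fun v hv => ?_⟩
    have hSR : S v = R v := sub_eq_zero.1 hv.2
    exact hSR ▸ hV v hv.1
  calc #{i | w i ≤ t} = finrank 𝕜 V := hcard.symm
    _ ≤ finrank 𝕜 ↥(V ⊓ (S - R).ker) + finrank 𝕜 (S - R).range :=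
      finrank_le_finrank_inf_ker_add_finrank_range V _
    _ ≤ #{k | u k ≤ t} + finrank 𝕜 (S - R).range := by gcongr

end AdjointCompSelf

section Matrix

variable {𝕜 m n : Type*} [RCLike 𝕜] [Fintype n] [DecidableEq n]

theorem finrank_range_toEuclideanLin [Finite m] (A : Matrix m n 𝕜) :
    finrank 𝕜 (toEuclideanLin A).range = A.rank := by
  rw [toEuclideanLin, toLpLin_eq_toLin, ← rank_eq_finrank_range_toLin]

theorem toEuclideanLin_eigenvectorBasis {H : Matrix n n 𝕜} (hH : H.IsHermitian) (i : n) :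
    toEuclideanLin H (hH.eigenvectorBasis i) = (hH.eigenvalues i : 𝕜) • hH.eigenvectorBasis i := by
  rw [toLpLin_apply, hH.mulVec_eigenvectorBasis, ← RCLike.real_smul_eq_coe_smul]
  rfl

variable [Fintype m]

/-- The singular values of a matrix `A` over `ℝ` or `ℂ` as the square roots of the eigenvalues of
`A * Aᴴ`. They are indexed by the rows of `A`, so they come with multiplicity and in no particular
order, and include zeros if `A` has more rows than columns. -/
noncomputable def rowSingularValues (A : Matrix n m 𝕜) (i : n) : ℝ :=
  √((isHermitian_mul_conjTranspose_self A).eigenvalues i)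

theorem adjoint_comp_self_toEuclideanLin_conjTranspose (A : Matrix n m 𝕜) :
    (toEuclideanLin Aᴴ).adjoint ∘ₗ toEuclideanLin Aᴴ = toEuclideanLin (A * Aᴴ) := by
  classical
  rw [← toEuclideanLin_conjTranspose_eq_adjoint, conjTranspose_conjTranspose, toLpLin_mul]

theorem adjoint_comp_self_eigenvectorBasis (A : Matrix n m 𝕜) (i : n) :
    ((toEuclideanLin Aᴴ).adjoint ∘ₗ toEuclideanLin Aᴴ)
        ((isHermitian_mul_conjTranspose_self A).eigenvectorBasis i) =
      ((isHermitian_mul_conjTranspose_self A).eigenvalues i : 𝕜) •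
        (isHermitian_mul_conjTranspose_self A).eigenvectorBasis i := by
  rw [adjoint_comp_self_toEuclideanLin_conjTranspose, toEuclideanLin_eigenvectorBasis]

open scoped ComplexOrder in
theorem card_rowSingularValues_le_le_add_rank (A B : Matrix n m 𝕜) (x : ℝ) :
    #{k | rowSingularValues A k ≤ x} ≤ #{k | rowSingularValues B k ≤ x} + (A - B).rank := by
  rcases lt_or_ge x 0 with hx | hx
  · have hempty : #{k | rowSingularValues A k ≤ x} = 0 :=
      card_filter_eq_zero_iff.2 fun k _ => (hx.trans_le (Real.sqrt_nonneg _)).not_ge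
    omega
  · have hcard := card_eigenvalues_le_le_add_finrank_range
      (adjoint_comp_self_eigenvectorBasis A) (adjoint_comp_self_eigenvectorBasis B) (x ^ 2)
    rw [← map_sub, ← conjTranspose_sub, finrank_range_toEuclideanLin, rank_conjTranspose] at hcard
    simpa only [rowSingularValues, Real.sqrt_le_left hx] using hcard

theorem abs_card_rowSingularValues_le_sub_le_rank (A B : Matrix n m 𝕜) (x : ℝ) :
    |(#{k | rowSingularValues A k ≤ x} : ℝ) - #{k | rowSingularValues B k ≤ x}| ≤
      (A - B).rank := by
  refine abs_sub_le_iff.2 ⟨sub_le_iff_le_add'.2 ?_, sub_le_iff_le_add'.2 ?_⟩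
  · exact_mod_cast card_rowSingularValues_le_le_add_rank A B x
  · rw [← matrix_rank_neg, neg_sub]
    exact_mod_cast card_rowSingularValues_le_le_add_rank B A x

theorem singVals_cdf_rank_inequality_general [Nonempty n] (A B : Matrix n m 𝕜) :
    ⨆ x : ℝ,
        |(Fintype.card n : ℝ)⁻¹ * #{k | rowSingularValues A k ≤ x}
          - (Fintype.card n : ℝ)⁻¹ * #{k | rowSingularValues B k ≤ x}|
      ≤ ((A - B).rank : ℝ) / Fintype.card n := by
  have hn : 0 < (Fintype.card n : ℝ)⁻¹ := inv_pos.2 (mod_cast Fintype.card_pos)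
  refine ciSup_le fun x => ?_
  rw [← mul_sub, abs_mul, abs_of_pos hn, div_eq_inv_mul, mul_le_mul_iff_right₀ hn]
  exact abs_card_rowSingularValues_le_sub_le_rank A B x

end Matrix

/-- Rank inequality (Thompson, Bai): the cumulative distribution functions of the
empirical singular value distributions of two `n × m` matrices differ uniformly by at
most `rank(A − B)/n`. -/
theorem singVals_cdf_rank_inequality
    (n m : ℕ) (hn : 0 < n) (A B : Matrix (Fin n) (Fin m) ℂ) :
    ⨆ x : ℝ,
        |(n : ℝ)⁻¹ * ((univ.filter fun k => singVals A k ≤ x).card : ℝ)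
          - (n : ℝ)⁻¹ * ((univ.filter fun k => singVals B k ≤ x).card : ℝ)|
      ≤ ((A - B).rank : ℝ) / n := by
  have : Nonempty (Fin n) := ⟨0, hn⟩
  simpa only [Fintype.card_fin] using! singVals_cdf_rank_inequality_general A B
end

section
/- Let A and B be n×n complex matrices, let 0 < α_n < β_n, and suppose all singular values of A and of B lie in [α_n, β_n]. Let F and G be the cumulative distribution functions of the empirical singular value measures (1/n)∑_{k=1}^n δ_{s_k(A)} and (1/n)∑_{k=1}^n δ_{s_k(B)}. Then |(1/n)log|det(A)| − (1/n)log|det(B)|| ≤ (log β_n − log α_n)·sup_{x∈ℝ}|F(x) − G(x)|. -/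
open Finset Matrix

/-!
For a random variable `X` with values in `[a, b]`, the layer cake formula gives
`𝔼 X = b - ∫ t in a..b, ℙ (X ≤ t)`, so two such means differ by at most `b - a` times the largest
difference of the distribution functions. Since `|det A|` is the product of the singular values,
`(1/n) log |det A|` is the mean of `log` under the empirical measure of the singular values; here
`X = log` takes values in `[log α, log β]`, and its distribution function at `t` is that of the
empirical measure at `exp t`.
-/

open MeasureTheory ProbabilityTheory
open scoped ENNReal

section DistributionFunction

variable {Ω Ω' : Type*} [MeasurableSpace Ω] [MeasurableSpace Ω'] {X : Ω → ℝ} {Y : Ω' → ℝ}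
  {a b K : ℝ}

lemma intervalIntegrable_measureReal_le (P : Measure Ω) [IsFiniteMeasure P] (X : Ω → ℝ) (a b : ℝ) :
    IntervalIntegrable (fun t ↦ P.real {ω | X ω ≤ t}) volume a b :=
  Monotone.intervalIntegrable fun _ _ hst ↦
    measureReal_mono fun _ (hω : X _ ≤ _) ↦ hω.trans hst

lemma integral_eq_sub_intervalIntegral_measureReal_le {P : Measure Ω} [IsFiniteMeasure P]
    (hXm : AEMeasurable X P) (hX : ∀ᵐ ω ∂P, X ω ∈ Set.Icc a b) :
    ∫ ω, X ω ∂P = P.real Set.univ * b - ∫ t in a..b, P.real {ω | X ω ≤ t} := by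
  rcases eq_zero_or_neZero P with rfl | _
  · simp
  have hab : a ≤ b := hX.exists.elim fun _ hω ↦ hω.1.trans hω.2
  have hXint : Integrable X P := .of_mem_Icc a b hXm hX
  have layer_cake : ∫ ω, (b - X ω) ∂P = ∫ t in Set.Ioc 0 (b - a), P.real {ω | t ≤ b - X ω} :=
    ((integrable_const b).sub hXint).integral_eq_integral_Ioc_meas_le
      (hX.mono fun _ hω ↦ sub_nonneg.2 hω.2) (hX.mono fun _ hω ↦ sub_le_sub_left hω.1 b)
  have swap (t : ℝ) (ω : Ω) : t ≤ b - X ω ↔ X ω ≤ b - t := le_sub_comm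
  have reflect : ∫ t in a..b, P.real {ω | X ω ≤ t} =
      ∫ t in Set.Ioc 0 (b - a), P.real {ω | t ≤ b - X ω} := by
    simp_rw [swap]
    rw [← intervalIntegral.integral_of_le (sub_nonneg.2 hab),
      intervalIntegral.integral_comp_sub_left fun t ↦ P.real {ω | X ω ≤ t}, sub_sub_cancel,
      sub_zero]
  rw [reflect, ← layer_cake, integral_sub (integrable_const b) hXint, integral_const, smul_eq_mul,
    sub_sub_cancel]

lemma abs_integral_sub_integral_le_of_abs_measureReal_le
    {P : Measure Ω} [IsProbabilityMeasure P] {P' : Measure Ω'} [IsProbabilityMeasure P']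
    (hXm : AEMeasurable X P) (hX : ∀ᵐ ω ∂P, X ω ∈ Set.Icc a b)
    (hYm : AEMeasurable Y P') (hY : ∀ᵐ ω ∂P', Y ω ∈ Set.Icc a b)
    (hK : ∀ t ∈ Set.Icc a b, |P.real {ω | X ω ≤ t} - P'.real {ω | Y ω ≤ t}| ≤ K) :
    |∫ ω, X ω ∂P - ∫ ω, Y ω ∂P'| ≤ (b - a) * K := by
  have hab : a ≤ b := hX.exists.elim fun _ hω ↦ hω.1.trans hω.2
  calc |∫ ω, X ω ∂P - ∫ ω, Y ω ∂P'|
      = |∫ t in a..b, (P.real {ω | X ω ≤ t} - P'.real {ω | Y ω ≤ t})| := by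
        rw [integral_eq_sub_intervalIntegral_measureReal_le hXm hX,
          integral_eq_sub_intervalIntegral_measureReal_le hYm hY,
          intervalIntegral.integral_sub (intervalIntegrable_measureReal_le P X a b)
            (intervalIntegrable_measureReal_le P' Y a b), probReal_univ, probReal_univ,
          sub_sub_sub_cancel_left, abs_sub_comm]
    _ ≤ K * |b - a| :=
        intervalIntegral.norm_integral_le_of_norm_le_const
          (f := fun t ↦ P.real {ω | X ω ≤ t} - P'.real {ω | Y ω ≤ t}) fun t ht ↦
            hK t (Set.Ioc_subset_Icc_self (Set.uIoc_of_le hab ▸ ht))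
    _ = (b - a) * K := by rw [abs_of_nonneg (sub_nonneg.2 hab), mul_comm]

end DistributionFunction

lemma bddAbove_range_abs_cdf_sub_cdf (μ ν : Measure ℝ) :
    BddAbove (Set.range fun x ↦ |cdf μ x - cdf ν x|) := by
  refine ⟨1, ?_⟩
  rintro _ ⟨x, rfl⟩
  exact abs_sub_le_of_nonneg_of_le (cdf_nonneg μ x) (cdf_le_one μ x) (cdf_nonneg ν x)
    (cdf_le_one ν x)

lemma measureReal_log_le_eq_cdf_exp {μ : Measure ℝ} [IsProbabilityMeasure μ]
    (hμ : ∀ᵐ x ∂μ, 0 < x) (t : ℝ) : μ.real {x | Real.log x ≤ t} = cdf μ (Real.exp t) := by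
  rw [cdf_eq_real]
  refine measureReal_congr ?_
  filter_upwards [hμ] with x hx using propext (Real.log_le_iff_le_exp hx)

theorem abs_integral_log_sub_integral_log_le {μ ν : Measure ℝ} [IsProbabilityMeasure μ]
    [IsProbabilityMeasure ν] {α β : ℝ} (hα : 0 < α) (hμ : ∀ᵐ x ∂μ, x ∈ Set.Icc α β)
    (hν : ∀ᵐ x ∂ν, x ∈ Set.Icc α β) :
    |∫ x, Real.log x ∂μ - ∫ x, Real.log x ∂ν| ≤
      (Real.log β - Real.log α) * ⨆ x, |cdf μ x - cdf ν x| := by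
  have log_mem {x : ℝ} (hx : x ∈ Set.Icc α β) :
      Real.log x ∈ Set.Icc (Real.log α) (Real.log β) :=
    ⟨Real.log_le_log hα hx.1, Real.log_le_log (hα.trans_le hx.1) hx.2⟩
  refine abs_integral_sub_integral_le_of_abs_measureReal_le
    Real.measurable_log.aemeasurable (hμ.mono fun _ ↦ log_mem)
    Real.measurable_log.aemeasurable (hν.mono fun _ ↦ log_mem) fun t _ ↦ ?_
  rw [measureReal_log_le_eq_cdf_exp (hμ.mono fun _ hx ↦ hα.trans_le hx.1),
    measureReal_log_le_eq_cdf_exp (hν.mono fun _ hx ↦ hα.trans_le hx.1)]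
  exact le_ciSup (bddAbove_range_abs_cdf_sub_cdf μ ν) (Real.exp t)

section EmpiricalMeasure

variable {ι E : Type*} [Fintype ι] [MeasurableSpace E]

/-- The empirical measure `(1/n) ∑ᵢ δ_{x i}` of a finite family of `n` points. It is a probability
measure for a nonempty family and the zero measure for the empty one. -/
noncomputable def empiricalMeasure (x : ι → E) : Measure E :=
  (Fintype.card ι : ℝ≥0∞)⁻¹ • ∑ i, Measure.dirac (x i)

instance [Nonempty ι] (x : ι → E) : IsProbabilityMeasure (empiricalMeasure x) :=
  ⟨by simp [empiricalMeasure, ENNReal.inv_mul_cancel]⟩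

lemma integral_empiricalMeasure [MeasurableSingletonClass E] {F : Type*} [NormedAddCommGroup F]
    [NormedSpace ℝ F] [CompleteSpace F] (x : ι → E) (f : E → F) :
    ∫ y, f y ∂empiricalMeasure x = (Fintype.card ι : ℝ)⁻¹ • ∑ i, f (x i) := by
  rw [empiricalMeasure, integral_smul_measure,
    integral_finsetSum_measure fun _ _ ↦ integrable_dirac enorm_lt_top]
  simp

lemma ae_empiricalMeasure_of_forall [MeasurableSingletonClass E] {x : ι → E} {p : E → Prop}
    (hp : ∀ i, p (x i)) : ∀ᵐ y ∂empiricalMeasure x, p y := by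
  refine Measure.ae_smul_measure ?_ _
  simpa [ae_iff, Measure.dirac_apply] using hp

lemma cdf_empiricalMeasure [Nonempty ι] (x : ι → ℝ) (t : ℝ) :
    cdf (empiricalMeasure x) t = (Fintype.card ι : ℝ)⁻¹ * #{i | x i ≤ t} := by
  rw [cdf_eq_real, ← integral_indicator_one measurableSet_Iic, integral_empiricalMeasure]
  simp [Set.indicator_apply]

end EmpiricalMeasure

section SingularValues

variable {n : ℕ}

lemma norm_det_eq_prod_singVals (A : Matrix (Fin n) (Fin n) ℂ) :
    ‖A.det‖ = ∏ i, singVals A i := by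
  have hsq : ‖A.det‖ ^ 2 = ∏ i, (isHermitian_mul_conjTranspose_self A).eigenvalues i :=
    calc ‖A.det‖ ^ 2 = ‖(A * Aᴴ).det‖ := by
          rw [det_mul, det_conjTranspose, norm_mul, norm_star, sq]
      _ = ∏ i, (isHermitian_mul_conjTranspose_self A).eigenvalues i := by
          rw [(isHermitian_mul_conjTranspose_self A).det_eq_prod_eigenvalues, norm_prod]
          exact prod_congr rfl fun i _ ↦
            RCLike.norm_of_nonneg (eigenvalues_self_mul_conjTranspose_nonneg A i)
  rw [← Real.sqrt_sq (norm_nonneg A.det), hsq,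
    Real.sqrt_prod _ fun i _ ↦ eigenvalues_self_mul_conjTranspose_nonneg A i]
  rfl

lemma inv_mul_log_norm_det_eq_integral_log {A : Matrix (Fin n) (Fin n) ℂ}
    (hA : ∀ i, singVals A i ≠ 0) :
    (n : ℝ)⁻¹ * Real.log ‖A.det‖ = ∫ x, Real.log x ∂empiricalMeasure (singVals A) := by
  rw [norm_det_eq_prod_singVals, Real.log_prod fun i _ ↦ hA i, integral_empiricalMeasure,
    Fintype.card_fin, smul_eq_mul]

end SingularValues

/-- If all singular values of `A` and `B` lie in `[α, β] ⊂ (0, ∞)`, then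
`|(1/n) log|det A| − (1/n) log|det B|| ≤ (log β − log α) · ‖F − G‖_∞`, where `F`, `G`
are the cumulative distribution functions of the empirical singular value
distributions of `A` and `B`. -/
theorem log_abs_det_diff_le
    (n : ℕ) (hn : 0 < n) (A B : Matrix (Fin n) (Fin n) ℂ)
    (α β : ℝ) (hα : 0 < α) (hαβ : α < β)
    (hA : ∀ i, singVals A i ∈ Set.Icc α β)
    (hB : ∀ i, singVals B i ∈ Set.Icc α β) :
    |(n : ℝ)⁻¹ * Real.log ‖A.det‖ - (n : ℝ)⁻¹ * Real.log ‖B.det‖|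
      ≤ (Real.log β - Real.log α) * ⨆ x : ℝ,
          |(n : ℝ)⁻¹ * ((univ.filter fun k => singVals A k ≤ x).card : ℝ)
            - (n : ℝ)⁻¹ * ((univ.filter fun k => singVals B k ≤ x).card : ℝ)| := by
  have : NeZero n := ⟨hn.ne'⟩
  rw [inv_mul_log_norm_det_eq_integral_log fun i ↦ (hα.trans_le (hA i).1).ne',
    inv_mul_log_norm_det_eq_integral_log fun i ↦ (hα.trans_le (hB i).1).ne']
  simpa only [cdf_empiricalMeasure, Fintype.card_fin] using
    abs_integral_log_sub_integral_log_le hα (ae_empiricalMeasure_of_forall hA)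
      (ae_empiricalMeasure_of_forall hB)
end
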